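/- For every y ∈ k^×, the H_k-modules M_2(y) and M̃_2(y) are simple and are not isomorphic to each other. -/

import Mathlib

/-- The defining relations of the affine Hecke algebra of type `A_2` (for `Gl_3`),
on the free algebra on four generators `T = X 0`, `T⁻¹ = X 1`, `S_1 = X 2`, `S_2 = X 3`. -/
inductive HeckeRel (R : Type) [CommRing R] (q : R) :
    FreeAlgebra R (Fin 4) → FreeAlgebra R (Fin 4) → Prop
  | TTinv : HeckeRel R q (FreeAlgebra.ι R 0 * FreeAlgebra.ι R 1) 1
  | TinvT : HeckeRel R q (FreeAlgebra.ι R 1 * FreeAlgebra.ι R 0) 1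
  | quad : HeckeRel R q
      ((FreeAlgebra.ι R 2 + 1) * (FreeAlgebra.ι R 2 - algebraMap R (FreeAlgebra R (Fin 4)) q)) 0
  | T3S1 : HeckeRel R q (FreeAlgebra.ι R 0 ^ 3 * FreeAlgebra.ι R 2)
      (FreeAlgebra.ι R 2 * FreeAlgebra.ι R 0 ^ 3)
  | braid : HeckeRel R q (FreeAlgebra.ι R 2 * FreeAlgebra.ι R 3 * FreeAlgebra.ι R 2)
      (FreeAlgebra.ι R 3 * FreeAlgebra.ι R 2 * FreeAlgebra.ι R 3)
  | TS2 : HeckeRel R q (FreeAlgebra.ι R 0 * FreeAlgebra.ι R 3)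
      (FreeAlgebra.ι R 2 * FreeAlgebra.ι R 0)

/-- The affine Hecke algebra `H_R` with parameter `q ∈ R`. -/
abbrev HeckeAlg (R : Type) [CommRing R] (q : R) := RingQuot (HeckeRel R q)

namespace HeckeAlg

variable (R : Type) [CommRing R] (q : R)

noncomputable def gen (i : Fin 4) : HeckeAlg R q :=
  RingQuot.mkAlgHom R (HeckeRel R q) (FreeAlgebra.ι R i)

noncomputable def T : HeckeAlg R q := gen R q 0
noncomputable def Tinv : HeckeAlg R q := gen R q 1
noncomputable def S1 : HeckeAlg R q := gen R q 2
noncomputable def S2 : HeckeAlg R q := gen R q 3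

theorem T_mul_Tinv : T R q * Tinv R q = 1 := by
  simpa [T, Tinv, gen, map_mul, map_one] using
    RingQuot.mkAlgHom_rel R (HeckeRel.TTinv (R := R) (q := q))

theorem Tinv_mul_T : Tinv R q * T R q = 1 := by
  simpa [T, Tinv, gen, map_mul, map_one] using
    RingQuot.mkAlgHom_rel R (HeckeRel.TinvT (R := R) (q := q))

theorem quad_rel : (S1 R q + 1) * (S1 R q - algebraMap R (HeckeAlg R q) q) = 0 := by
  simpa [S1, gen, map_mul, map_add, map_sub, map_one, map_zero, AlgHom.commutes] using
    RingQuot.mkAlgHom_rel R (HeckeRel.quad (R := R) (q := q))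

theorem T3_mul_S1 : T R q ^ 3 * S1 R q = S1 R q * T R q ^ 3 := by
  simpa [T, S1, gen, map_mul, map_pow] using
    RingQuot.mkAlgHom_rel R (HeckeRel.T3S1 (R := R) (q := q))

theorem braid_rel : S1 R q * S2 R q * S1 R q = S2 R q * S1 R q * S2 R q := by
  simpa [S1, S2, gen, map_mul] using
    RingQuot.mkAlgHom_rel R (HeckeRel.braid (R := R) (q := q))

theorem T_mul_S2 : T R q * S2 R q = S1 R q * T R q := by
  simpa [T, S1, S2, gen, map_mul] using
    RingQuot.mkAlgHom_rel R (HeckeRel.TS2 (R := R) (q := q))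

/-- The canonical (base change) ring homomorphism `H_R → H_S` induced by a ring
homomorphism `R → S` sending the parameter `q` to the parameter `q'`. -/
noncomputable def map {R S : Type} [CommRing R] [CommRing S] (f : R →+* S) (q : R) (q' : S)
    (h : f q = q') : HeckeAlg R q →+* HeckeAlg S q' := by
  subst h
  letI : Algebra R (HeckeAlg S (f q)) :=
    RingHom.toAlgebra' ((algebraMap S (HeckeAlg S (f q))).comp f)
      (fun c x => by simpa using Algebra.commutes (f c) x)
  refine RingQuot.lift
    ⟨((FreeAlgebra.lift R fun i => gen S (f q) i : _ →ₐ[R] HeckeAlg S (f q)) :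
        FreeAlgebra R (Fin 4) →+* HeckeAlg S (f q)), ?_⟩
  have key : ∀ i : Fin 4,
      (FreeAlgebra.lift R fun j => gen S (f q) j) (FreeAlgebra.ι R i) = gen S (f q) i :=
    fun i => FreeAlgebra.lift_ι_apply _ _
  have keyq : (FreeAlgebra.lift R fun j => gen S (f q) j)
      (algebraMap R (FreeAlgebra R (Fin 4)) q) = algebraMap S (HeckeAlg S (f q)) (f q) := by
    rw [AlgHom.commutes]
    rfl
  intro a b hab
  cases hab with
  | TTinv => simpa [key, T, Tinv] using T_mul_Tinv S (f q)
  | TinvT => simpa [key, T, Tinv] using Tinv_mul_T S (f q)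
  | quad => simpa [key, keyq, S1] using quad_rel S (f q)
  | T3S1 => simpa [key, T, S1] using T3_mul_S1 S (f q)
  | braid => simpa [key, S1, S2] using braid_rel S (f q)
  | TS2 => simpa [key, T, S1, S2] using T_mul_S2 S (f q)

/-- `S_1⁻¹ = q⁻¹ (S_1 - q + 1)`, where `qi` is an inverse of `q` in `R`. -/
noncomputable def S1i (qi : R) : HeckeAlg R q :=
  algebraMap R (HeckeAlg R q) qi * (S1 R q - algebraMap R (HeckeAlg R q) q + 1)

/-- `S_2⁻¹ = q⁻¹ (S_2 - q + 1)`, where `qi` is an inverse of `q` in `R`. -/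
noncomputable def S2i (qi : R) : HeckeAlg R q :=
  algebraMap R (HeckeAlg R q) qi * (S2 R q - algebraMap R (HeckeAlg R q) q + 1)

/-- The Bernstein elements `Y_1 = q S_1⁻¹ S_2⁻¹ T`, `Y_2 = S_2⁻¹ T S_1`,
`Y_3 = q⁻¹ T S_1 S_2`, where `qi` is an inverse of `q` in `R`. -/
noncomputable def Y (qi : R) : Fin 3 → HeckeAlg R q :=
  ![algebraMap R (HeckeAlg R q) q * S1i R q qi * S2i R q qi * T R q,
    S2i R q qi * T R q * S1 R q,
    algebraMap R (HeckeAlg R q) qi * T R q * S1 R q * S2 R q]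

end HeckeAlg

noncomputable section

variable (p : ℕ) [Fact p.Prime] (k : Type) [Field k] [IsAlgClosed k] [CharP k p]

/-- `H_k = H ⊗_{ℤ[q]} k` with `q ↦ 0`. -/
abbrev Hk : Type := HeckeAlg k 0

/-- The action of `T` on a `1`-dimensional space: multiplication by `c`. -/
def Tmat1 (c : k) : Module.End k (Fin 1 → k) := Matrix.mulVecLin !![c]

/-- The action of `T` on the `2`-dimensional space with basis `w, Tw` where
`T(Tw) = -y²w - yTw`. -/
def Tmat2 (y : k) : Module.End k (Fin 2 → k) := Matrix.mulVecLin !![0, -y^2; 1, -y]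

/-- The action of `T` on the `3`-dimensional space with basis `v, Tv, T²v` where
`T(T²v) = zv`. -/
def Tmat3 (z : k) : Module.End k (Fin 3 → k) := Matrix.mulVecLin !![0, 0, z; 1, 0, 0; 0, 1, 0]

/-- The action of `T` on the `6`-dimensional space with basis `v, Tv, T²v, w, Tw, T²w`
where `T(T²v) = zv`, `T(T²w) = zw`. -/
def Tmat6 (z : k) : Module.End k (Fin 6 → k) := Matrix.mulVecLin
  !![0, 0, z, 0, 0, 0;
     1, 0, 0, 0, 0, 0;
     0, 1, 0, 0, 0, 0;
     0, 0, 0, 0, 0, z;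
     0, 0, 0, 1, 0, 0;
     0, 0, 0, 0, 1, 0]

/-- The action of `S_1` on `L_6(z,y)`: `S_1v = 0`, `S_1(Tv) = T²w`, `S_1(T²v) = -T²v`,
`S_1w = -w`, `S_1(Tw) = (y/z)T²v`, `S_1(T²w) = -T²w`. -/
def SL6 (z y : k) : Module.End k (Fin 6 → k) := Matrix.mulVecLin
  !![0, 0, 0,  0,  0,     0;
     0, 0, 0,  0,  0,     0;
     0, 0, -1, 0,  y / z, 0;
     0, 0, 0,  -1, 0,     0;
     0, 0, 0,  0,  0,     0;
     0, 1, 0,  0,  0,     -1]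

/-- The action of `S_1` on `L̃_6(z,y)`: as on `L_6(z,y)` except `S_1v = w`, `S_1(Tv) = 0`. -/
def SLt6 (z y : k) : Module.End k (Fin 6 → k) := Matrix.mulVecLin
  !![0, 0, 0,  0,  0,     0;
     0, 0, 0,  0,  0,     0;
     0, 0, -1, 0,  y / z, 0;
     1, 0, 0,  -1, 0,     0;
     0, 0, 0,  0,  0,     0;
     0, 0, 0,  0,  0,     -1]

/-- The action of `S_1` on `K_6(z,y,y')`: `S_1v = w`, `S_1(Tv) = (y/y')T²w`,
`S_1(T²v) = -T²v`, `S_1w = -w`, `S_1(Tw) = (y'/z)T²v`, `S_1(T²w) = -T²w`. -/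
def SK6 (z y y' : k) : Module.End k (Fin 6 → k) := Matrix.mulVecLin
  !![0, 0,      0,  0,  0,      0;
     0, 0,      0,  0,  0,      0;
     0, 0,      -1, 0,  y' / z, 0;
     1, 0,      0,  -1, 0,      0;
     0, 0,      0,  0,  0,      0;
     0, y / y', 0,  0,  0,      -1]

/-- The action of `S_1` on `M_3(z,y)`: `S_1v = 0`, `S_1(Tv) = y⁻¹T²v`, `S_1(T²v) = -T²v`. -/
def SM3 (y : k) : Module.End k (Fin 3 → k) := Matrix.mulVecLin
  !![0, 0, 0; 0, 0, 0; 0, y⁻¹, -1]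

/-- The action of `S_1` on `M̃_3(z,y)`: `S_1v = -v`, `S_1(Tv) = -y⁻¹T²v`, `S_1(T²v) = -T²v`. -/
def SMt3 (y : k) : Module.End k (Fin 3 → k) := Matrix.mulVecLin
  !![-1, 0, 0; 0, 0, 0; 0, -y⁻¹, -1]

/-- The action of `S_1` on `N_3(z,y)`: `S_1v = -v`, `S_1(Tv) = 0`, `S_1(T²v) = -yTv - T²v`. -/
def SN3 (y : k) : Module.End k (Fin 3 → k) := Matrix.mulVecLin
  !![-1, 0, 0; 0, 0, -y; 0, 0, -1]

/-- The action of `S_1` on `Ñ_3(z,y)`: `S_1v = 0`, `S_1(Tv) = 0`, `S_1(T²v) = yTv - T²v`. -/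
def SNt3 (y : k) : Module.End k (Fin 3 → k) := Matrix.mulVecLin
  !![0, 0, 0; 0, 0, y; 0, 0, -1]

/-- The action of `S_1` on `P_3(z)`: `S_1v = 0`, `S_1(Tv) = 0`, `S_1(T²v) = -T²v`. -/
def SP3 : Module.End k (Fin 3 → k) := Matrix.mulVecLin
  !![0, 0, 0; 0, 0, 0; 0, 0, -1]

/-- The action of `S_1` on `P̃_3(z)`: `S_1v = -v`, `S_1(Tv) = 0`, `S_1(T²v) = -T²v`. -/
def SPt3 : Module.End k (Fin 3 → k) := Matrix.mulVecLin
  !![-1, 0, 0; 0, 0, 0; 0, 0, -1]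

/-- The action of `S_1` on `M_2(y)`: `S_1w = -w`, `S_1(Tw) = 0`. -/
def SM2 : Module.End k (Fin 2 → k) := Matrix.mulVecLin !![-1, 0; 0, 0]

/-- The action of `S_1` on `M̃_2(y)`: `S_1w = 0`, `S_1(Tw) = -Tw`. -/
def SMt2 : Module.End k (Fin 2 → k) := Matrix.mulVecLin !![0, 0; 0, -1]

end

/-!
On `M_2(y)` the operator `T` satisfies `T² + yT + y² = 0`, so `T³ = y³` is an invertible scalar and
the relations of `H_k` reduce to small computations. Fixing `T` and sending `S_i` to `q - 1 - S_i`
defines an involution of the algebra, and `M̃_2(y)` is the twist of `M_2(y)` by it.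

Since `-S_1` is the projection onto the line `kw` along `k Tw`, a submodule contains the two
components of each of its elements, and `T` maps each of the two lines to a vector with nonzero
component in the other one: the module is simple. The twist has the same submodules. Finally,
`T S_1` has trace `0` on `M_2(y)` and trace `y ≠ 0` on `M̃_2(y)`, so they are not isomorphic.
-/

theorem eq_bot_or_eq_top_of_pi_single_mem {ι K : Type*} [Finite ι] [DecidableEq ι]
    [DivisionRing K] {W : Submodule K (ι → K)} {f : Module.End K (ι → K)}
    (hsingle : ∀ x ∈ W, ∀ i, Pi.single i (x i) ∈ W) (hf : ∀ x ∈ W, f x ∈ W)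
    (hconn : ∀ i j, Relation.ReflTransGen (fun i j => f (Pi.single i 1) j ≠ 0) i j) :
    W = ⊥ ∨ W = ⊤ := by
  have single_one_mem : ∀ x ∈ W, ∀ i, x i ≠ 0 → Pi.single i 1 ∈ W := fun x hx i hi => by
    simpa [← Pi.single_smul, hi] using W.smul_mem (x i)⁻¹ (hsingle x hx i)
  refine or_iff_not_imp_left.mpr fun hW => ?_
  obtain ⟨x, hx, hx0⟩ := W.exists_mem_ne_zero_of_ne_bot hW
  obtain ⟨i, hi⟩ := Function.ne_iff.mp hx0
  have basis_mem (j : ι) : Pi.single j 1 ∈ W := by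
    induction hconn i j with
    | refl => exact single_one_mem x hx i hi
    | tail _ hjl ih => exact single_one_mem _ (hf _ ih) _ hjl
  rw [eq_top_iff, ← (Pi.basisFun K ι).span_eq, Submodule.span_le]
  rintro _ ⟨j, rfl⟩
  simpa using basis_mem j

theorem trace_eq_of_intertwining {R M N : Type*} [CommRing R] [AddCommGroup M] [Module R M]
    [AddCommGroup N] [Module R N] {f : Module.End R M} {f' : Module.End R N} (g : M ≃ₗ[R] N)
    (h : ∀ x, g (f x) = f' (g x)) : LinearMap.trace R M f = LinearMap.trace R N f' := by
  have hconj : g.conj f = f' := LinearMap.ext fun x => by simp [LinearEquiv.conj_apply, h]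
  rw [← hconj, LinearMap.trace_conj']

section Braid

variable {R A : Type*} [CommRing R] [Ring A] [Algebra R A]

theorem mul_self_of_quadratic {q : R} {a : A} (h : (a + 1) * (a - algebraMap R A q) = 0) :
    a * a = (q - 1) • a + q • 1 := by
  rw [Algebra.algebraMap_eq_smul_one] at h
  rw [← sub_eq_zero, ← h]
  simp only [add_mul, mul_sub, mul_smul_comm, mul_one, one_mul]
  module

theorem smul_one_sub_mul_mul {q r : R} {a b : A} (ha : a * a = r • a + q • 1) :
    (r • 1 - a) * (r • 1 - b) * (r • 1 - a) =
      (r ^ 3 + r * q) • 1 - r ^ 2 • (a + b) + r • (a * b + b * a) - a * b * a := by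
  simp only [sub_mul, mul_sub, smul_mul_assoc, mul_smul_comm, mul_one, one_mul, ha]
  module

theorem smul_one_sub_braid {q r : R} {a b : A} (ha : a * a = r • a + q • 1)
    (hb : b * b = r • b + q • 1) (hab : a * b * a = b * a * b) :
    (r • 1 - a) * (r • 1 - b) * (r • 1 - a) = (r • 1 - b) * (r • 1 - a) * (r • 1 - b) := by
  rw [smul_one_sub_mul_mul ha, smul_one_sub_mul_mul hb, hab, add_comm a b,
    add_comm (a * b) (b * a)]

end Braid

namespace HeckeAlg

section Lift

variable {R : Type} [CommRing R] {q : R} {A : Type*} [Ring A] [Algebra R A]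

/-- The universal property of `H_R`: an algebra map out of it is given by the images `t`, `s`, `u`
of `T`, `S_1`, `S_2`. Invertibility of `T` is encoded by taking `t` to be a unit. -/
noncomputable def lift (t : Aˣ) (s u : A) (hquad : (s + 1) * (s - algebraMap R A q) = 0)
    (hcube : Commute ((t : A) ^ 3) s) (hbraid : s * u * s = u * s * u) (htu : t * u = s * t) :
    HeckeAlg R q →ₐ[R] A :=
  RingQuot.liftAlgHom R ⟨FreeAlgebra.lift R ![(t : A), ↑t⁻¹, s, u], fun _ _ hab => by
    cases hab with
    | TTinv => simp
    | TinvT => simp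
    | quad => simpa using hquad
    | T3S1 => simpa using hcube.eq
    | braid => simpa using hbraid
    | TS2 => simpa using htu⟩

variable {t : Aˣ} {s u : A} {hquad : (s + 1) * (s - algebraMap R A q) = 0}
  {hcube : Commute ((t : A) ^ 3) s} {hbraid : s * u * s = u * s * u} {htu : t * u = s * t}

@[simp]
theorem lift_T : lift t s u hquad hcube hbraid htu (T R q) = t := by
  simp [lift, T, gen]

@[simp]
theorem lift_S1 : lift t s u hquad hcube hbraid htu (S1 R q) = s := by
  simp [lift, S1, gen]

end Lift

section Twist

variable (R : Type) [CommRing R] (q : R)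

/-- `T` as a unit of `H_R`. -/
noncomputable def unitT : (HeckeAlg R q)ˣ := ⟨T R q, Tinv R q, T_mul_Tinv R q, Tinv_mul_T R q⟩

theorem S2_eq_conj : S2 R q = Tinv R q * S1 R q * T R q := by
  rw [mul_assoc, ← T_mul_S2, ← mul_assoc, Tinv_mul_T, one_mul]

theorem S1_mul_self : S1 R q * S1 R q = (q - 1) • S1 R q + q • 1 :=
  mul_self_of_quadratic (quad_rel R q)

theorem S2_mul_self : S2 R q * S2 R q = (q - 1) • S2 R q + q • 1 :=
  calc S2 R q * S2 R q
      = Tinv R q * S1 R q * (T R q * Tinv R q) * S1 R q * T R q := by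
        simp only [S2_eq_conj, mul_assoc]
    _ = Tinv R q * (S1 R q * S1 R q) * T R q := by rw [T_mul_Tinv]; simp only [mul_one, mul_assoc]
    _ = (q - 1) • S2 R q + q • 1 := by
        rw [S1_mul_self, S2_eq_conj]
        simp only [mul_add, add_mul, mul_smul_comm, smul_mul_assoc, mul_one, Tinv_mul_T]

/-- The algebra endomorphism of `H_R` fixing `T` and sending `S_i` to `q - 1 - S_i`. -/
noncomputable def twist : HeckeAlg R q →ₐ[R] HeckeAlg R q :=
  lift (unitT R q) ((q - 1) • 1 - S1 R q) ((q - 1) • 1 - S2 R q)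
    (by
      rw [Algebra.algebraMap_eq_smul_one]
      simp only [add_mul, sub_mul, mul_sub, smul_mul_assoc, mul_smul_comm, mul_one, one_mul,
        S1_mul_self]
      module)
    (((Commute.one_right _).smul_right _).sub_right (T3_mul_S1 R q))
    (smul_one_sub_braid (S1_mul_self R q) (S2_mul_self R q) (braid_rel R q))
    (by simp [unitT, mul_sub, sub_mul, T_mul_S2])

theorem twist_T : twist R q (T R q) = T R q := by simp [twist, unitT]

theorem twist_S1 : twist R q (S1 R q) = (q - 1) • 1 - S1 R q := by simp [twist]

end Twist

end HeckeAlg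

section TwoDimensional

variable {k : Type} [Field k]

theorem Tmat2_apply (y : k) (x : Fin 2 → k) : Tmat2 k y x = ![-(y ^ 2 * x 1), x 0 - y * x 1] := by
  simp [Tmat2, Matrix.vecHead, Matrix.vecTail, sub_eq_add_neg]

theorem SM2_apply (x : Fin 2 → k) : SM2 k x = ![-x 0, 0] := by
  simp [SM2, Matrix.vecHead]

theorem SMt2_eq_neg_one_sub_SM2 : SMt2 k = -1 - SM2 k := by
  refine LinearMap.ext fun x => funext fun i => ?_
  fin_cases i <;> simp [SM2, SMt2, Matrix.vecHead, Matrix.vecTail]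

theorem Tmat2_pow_three (y : k) : Tmat2 k y ^ 3 = algebraMap k _ (y ^ 3) := by
  refine LinearMap.ext fun x => funext fun i => ?_
  fin_cases i <;> simp [pow_three, Tmat2_apply] <;> ring

/-- The action of `T` on `M_2(y)` as a unit; it is invertible because its cube is the scalar
`y³`. -/
noncomputable def unitTmat2 (y : kˣ) : (Module.End k (Fin 2 → k))ˣ :=
  Units.ofPow (Units.map (algebraMap k (Module.End k (Fin 2 → k))) (y ^ 3)) (Tmat2 k y)
    three_ne_zero (by simp [Tmat2_pow_three])

/-- The action of `S_2 = T⁻¹ S_1 T` on `M_2(y)`: `S_2w = 0`, `S_2(Tw) = -yw - Tw`. -/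
def S2M2 (y : k) : Module.End k (Fin 2 → k) := Matrix.mulVecLin !![0, -y; 0, -1]

theorem S2M2_apply (y : k) (x : Fin 2 → k) : S2M2 y x = ![-(y * x 1), -x 1] := by
  simp [S2M2, Matrix.vecHead, Matrix.vecTail]

/-- The `H_k`-module `M_2(y)`, as a representation. -/
noncomputable def M2 (y : kˣ) : Hk k →ₐ[k] Module.End k (Fin 2 → k) :=
  HeckeAlg.lift (unitTmat2 y) (SM2 k) (S2M2 (y : k))
    (LinearMap.ext fun x => by simp [SM2_apply])
    (by
      change Commute (Tmat2 k y ^ 3) (SM2 k)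
      rw [Tmat2_pow_three]
      exact Algebra.commute_algebraMap_left _ _)
    (LinearMap.ext fun x => by simp [SM2_apply, S2M2_apply])
    (LinearMap.ext fun x => by
      change Tmat2 k y (S2M2 (y : k) x) = SM2 k (Tmat2 k y x)
      simp [Tmat2_apply, SM2_apply, S2M2_apply, pow_two, mul_assoc])

/-- The `H_k`-module `M̃_2(y)`, as a representation: the twist of `M_2(y)` by
`HeckeAlg.twist`. -/
noncomputable def Mt2 (y : kˣ) : Hk k →ₐ[k] Module.End k (Fin 2 → k) :=
  (M2 y).comp (HeckeAlg.twist k 0)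

theorem M2_T (y : kˣ) : M2 y (HeckeAlg.T k 0) = Tmat2 k y := HeckeAlg.lift_T

theorem M2_S1 (y : kˣ) : M2 y (HeckeAlg.S1 k 0) = SM2 k := HeckeAlg.lift_S1

theorem Mt2_T (y : kˣ) : Mt2 y (HeckeAlg.T k 0) = Tmat2 k y := by
  rw [Mt2, AlgHom.comp_apply, HeckeAlg.twist_T, M2_T]

theorem Mt2_S1 (y : kˣ) : Mt2 y (HeckeAlg.S1 k 0) = SMt2 k := by
  rw [Mt2, AlgHom.comp_apply, HeckeAlg.twist_S1, ← Algebra.algebraMap_eq_smul_one, map_sub,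
    AlgHom.commutes, M2_S1, zero_sub, map_neg, map_one, SMt2_eq_neg_one_sub_SM2]

theorem pi_single_mem_of_SM2_mem {W : Submodule k (Fin 2 → k)} (hS : ∀ x ∈ W, SM2 k x ∈ W)
    {x : Fin 2 → k} (hx : x ∈ W) (i : Fin 2) : Pi.single i (x i) ∈ W := by
  fin_cases i
  · have h : Pi.single 0 (x 0) = -SM2 k x := by
      ext i; fin_cases i <;> simp [SM2_apply]
    exact h ▸ W.neg_mem (hS x hx)
  · have h : Pi.single 1 (x 1) = x + SM2 k x := by
      ext i; fin_cases i <;> simp [SM2_apply]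
    exact h ▸ W.add_mem hx (hS x hx)

theorem eq_bot_or_eq_top_of_Tmat2_mem_of_SM2_mem {y : k} (hy : y ≠ 0)
    {W : Submodule k (Fin 2 → k)} (hT : ∀ x ∈ W, Tmat2 k y x ∈ W) (hS : ∀ x ∈ W, SM2 k x ∈ W) :
    W = ⊥ ∨ W = ⊤ := by
  refine eq_bot_or_eq_top_of_pi_single_mem (fun x hx => pi_single_mem_of_SM2_mem hS hx) hT
    fun i j => ?_
  obtain rfl | hij := eq_or_ne i j
  · exact .refl
  · refine .single ?_
    fin_cases i <;> fin_cases j <;> simp_all [Tmat2_apply]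

theorem eq_bot_or_eq_top_of_M2_mem (y : kˣ) {W : Submodule k (Fin 2 → k)}
    (hW : ∀ a : Hk k, ∀ x ∈ W, M2 y a x ∈ W) : W = ⊥ ∨ W = ⊤ :=
  eq_bot_or_eq_top_of_Tmat2_mem_of_SM2_mem y.ne_zero (fun x hx => M2_T y ▸ hW _ x hx)
    fun x hx => M2_S1 y ▸ hW _ x hx

theorem eq_bot_or_eq_top_of_Mt2_mem (y : kˣ) {W : Submodule k (Fin 2 → k)}
    (hW : ∀ a : Hk k, ∀ x ∈ W, Mt2 y a x ∈ W) : W = ⊥ ∨ W = ⊤ := by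
  refine eq_bot_or_eq_top_of_Tmat2_mem_of_SM2_mem y.ne_zero (fun x hx => Mt2_T y ▸ hW _ x hx)
    fun x hx => ?_
  have hSMt2 : -x - SM2 k x ∈ W := by
    simpa [Mt2_S1, SMt2_eq_neg_one_sub_SM2] using hW (HeckeAlg.S1 k 0) x hx
  exact (W.sub_mem_iff_right (W.neg_mem hx)).mp hSMt2

theorem trace_M2_T_mul_S1 (y : kˣ) :
    LinearMap.trace k _ (M2 y (HeckeAlg.T k 0 * HeckeAlg.S1 k 0)) = 0 := by
  rw [map_mul, M2_T, M2_S1, Tmat2, SM2, Module.End.mul_eq_comp, ← Matrix.mulVecLin_mul,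
    ← Matrix.toLin'_apply', Matrix.trace_toLin'_eq]
  simp

theorem trace_Mt2_T_mul_S1 (y : kˣ) :
    LinearMap.trace k _ (Mt2 y (HeckeAlg.T k 0 * HeckeAlg.S1 k 0)) = y := by
  rw [map_mul, Mt2_T, Mt2_S1, Tmat2, SMt2, Module.End.mul_eq_comp, ← Matrix.mulVecLin_mul,
    ← Matrix.toLin'_apply', Matrix.trace_toLin'_eq]
  simp

theorem not_exists_M2_equiv_Mt2 (y : kˣ) :
    ¬ ∃ g : (Fin 2 → k) ≃ₗ[k] (Fin 2 → k), ∀ (a : Hk k) (x : Fin 2 → k),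
        g (M2 y a x) = Mt2 y a (g x) := by
  rintro ⟨g, hg⟩
  have htrace := trace_eq_of_intertwining g (hg (HeckeAlg.T k 0 * HeckeAlg.S1 k 0))
  rw [trace_M2_T_mul_S1, trace_Mt2_T_mul_S1] at htrace
  exact y.ne_zero htrace.symm

end TwoDimensional

theorem statement18_general (k : Type) [Field k] (y : kˣ) :
    ∃ ρ ρt : Hk k →ₐ[k] Module.End k (Fin 2 → k),
      ρ (HeckeAlg.T k 0) = Tmat2 k y ∧ ρ (HeckeAlg.S1 k 0) = SM2 k ∧
      ρt (HeckeAlg.T k 0) = Tmat2 k y ∧ ρt (HeckeAlg.S1 k 0) = SMt2 k ∧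
      (∀ W : Submodule k (Fin 2 → k), (∀ a : Hk k, ∀ x ∈ W, ρ a x ∈ W) → W = ⊥ ∨ W = ⊤) ∧
      (∀ W : Submodule k (Fin 2 → k), (∀ a : Hk k, ∀ x ∈ W, ρt a x ∈ W) → W = ⊥ ∨ W = ⊤) ∧
      ¬ ∃ g : (Fin 2 → k) ≃ₗ[k] (Fin 2 → k), ∀ (a : Hk k) (x : Fin 2 → k),
          g (ρ a x) = ρt a (g x) :=
  ⟨M2 y, Mt2 y, M2_T y, M2_S1 y, Mt2_T y, Mt2_S1 y, fun _ => eq_bot_or_eq_top_of_M2_mem y,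
    fun _ => eq_bot_or_eq_top_of_Mt2_mem y, not_exists_M2_equiv_Mt2 y⟩

/-- For every `y ∈ k^×`, the `H_k`-modules `M_2(y)` and `M̃_2(y)` are simple
and are not isomorphic to each other. -/
theorem statement18 (p : ℕ) [Fact p.Prime] (k : Type) [Field k] [IsAlgClosed k] [CharP k p]
    (y : kˣ) :
    ∃ ρ ρt : Hk k →ₐ[k] Module.End k (Fin 2 → k),
      ρ (HeckeAlg.T k 0) = Tmat2 k y ∧ ρ (HeckeAlg.S1 k 0) = SM2 k ∧
      ρt (HeckeAlg.T k 0) = Tmat2 k y ∧ ρt (HeckeAlg.S1 k 0) = SMt2 k ∧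
      (∀ W : Submodule k (Fin 2 → k), (∀ a : Hk k, ∀ x ∈ W, ρ a x ∈ W) → W = ⊥ ∨ W = ⊤) ∧
      (∀ W : Submodule k (Fin 2 → k), (∀ a : Hk k, ∀ x ∈ W, ρt a x ∈ W) → W = ⊥ ∨ W = ⊤) ∧
      ¬ ∃ g : (Fin 2 → k) ≃ₗ[k] (Fin 2 → k), ∀ (a : Hk k) (x : Fin 2 → k),
          g (ρ a x) = ρt a (g x) :=
  statement18_general k y
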